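/- Let F be a nonzero homogeneous polynomial of degree 3 in k[x₀,x₁,x₂,x₃] such that the cubic surface V(F) is smooth, and let A₁, A₂ ∈ GL₄(k) be reflections leaving V(F) invariant whose centers p₁ and p₂ are distinct points of ℙ³(k). Then the commutator A₁A₂A₁⁻¹A₂⁻¹ is a scalar matrix (i.e., the images of A₁ and A₂ in PGL₄(k) commute) if and only if the projective line through p₁ and p₂ is contained in V(F). -/

import Mathlib

open MvPolynomial Matrix

/-- The polynomial `F(A·x)`, obtained from `F` by substituting
`xᵢ ↦ ∑ⱼ Aᵢⱼ xⱼ`. -/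
noncomputable def substMatrix {k : Type*} [Field k] (A : Matrix (Fin 4) (Fin 4) k)
    (F : MvPolynomial (Fin 4) k) : MvPolynomial (Fin 4) k :=
  aeval (fun i => ∑ j, C (A i j) * X j) F

/-- A matrix `A` leaves the cubic surface `V(F)` invariant if `F(A·x) = λ·F(x)`
for some `λ ∈ kˣ`. -/
def LeavesInvariant {k : Type*} [Field k] (A : Matrix (Fin 4) (Fin 4) k)
    (F : MvPolynomial (Fin 4) k) : Prop :=
  ∃ lam : kˣ, substMatrix A F = (lam : k) • F

/-- `F` vanishes identically on the linear subspace `W ⊆ k⁴`. -/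
def VanishesOn {k : Type*} [Field k] (F : MvPolynomial (Fin 4) k)
    (W : Submodule k (Fin 4 → k)) : Prop :=
  ∀ x ∈ W, eval x F = 0

/-- `W` is (the cone over) a projective line contained in the surface `V(F)`. -/
def IsLineIn {k : Type*} [Field k] (F : MvPolynomial (Fin 4) k)
    (W : Submodule k (Fin 4 → k)) : Prop :=
  Module.finrank k W = 2 ∧ VanishesOn F W

/-- `L`, a 1-dimensional subspace of `k⁴` regarded as a point of `ℙ³(k)`, is an
Eckardt point of `V(F)`: at least three distinct projective lines contained in
`V(F)` pass through it. -/
def IsEckardtPoint {k : Type*} [Field k] (F : MvPolynomial (Fin 4) k)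
    (L : Submodule k (Fin 4 → k)) : Prop :=
  Module.finrank k L = 1 ∧
    ∃ W₁ W₂ W₃ : Submodule k (Fin 4 → k),
      W₁ ≠ W₂ ∧ W₁ ≠ W₃ ∧ W₂ ≠ W₃ ∧
      IsLineIn F W₁ ∧ IsLineIn F W₂ ∧ IsLineIn F W₃ ∧
      L ≤ W₁ ∧ L ≤ W₂ ∧ L ≤ W₃


/-! ### Trilinear presentation of a cubic form -/

section Cubic

variable {k : Type*} [Field k]

/-- Trilinear forms on `k⁴`. -/
abbrev Tri (k : Type*) [Field k] :=
  (Fin 4 → k) →ₗ[k] (Fin 4 → k) →ₗ[k] (Fin 4 → k) →ₗ[k] k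

/-- The cubic form. -/
def cF (M : Tri k) (x : Fin 4 → k) : k := M x x x

/-- The derivative at `x` in direction `y`. -/
def cD (M : Tri k) (x y : Fin 4 → k) : k := M y x x + M x y x + M x x y

/-- The full polarization. -/
def cT (M : Tri k) (x y z : Fin 4 → k) : k :=
  M x y z + M x z y + M y x z + M y z x + M z x y + M z y x

lemma cF_add (M : Tri k) (x y : Fin 4 → k) (t : k) :
    cF M (x + t • y) = cF M x + t * cD M x y + t ^ 2 * cD M y x + t ^ 3 * cF M y := by
  simp only [cF, cD, map_add, map_smul, LinearMap.add_apply, LinearMap.smul_apply, smul_eq_mul]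
  ring

lemma cF_smul (M : Tri k) (x : Fin 4 → k) (t : k) : cF M (t • x) = t ^ 3 * cF M x := by
  simp only [cF, map_smul, LinearMap.smul_apply, smul_eq_mul]
  ring

lemma cD_add (M : Tri k) (x y z : Fin 4 → k) (t : k) :
    cD M (x + t • y) z = cD M x z + t * cT M x y z + t ^ 2 * cD M y z := by
  simp only [cT, cD, map_add, map_smul, LinearMap.add_apply, LinearMap.smul_apply, smul_eq_mul]
  ring

lemma cD_smul (M : Tri k) (x z : Fin 4 → k) (t : k) :
    cD M (t • x) z = t ^ 2 * cD M x z := by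
  simp only [cD, map_smul, LinearMap.smul_apply, smul_eq_mul]
  ring

lemma cD_add_right (M : Tri k) (x y z : Fin 4 → k) (t : k) :
    cD M x (y + t • z) = cD M x y + t * cD M x z := by
  simp only [cD, map_add, map_smul, LinearMap.add_apply, LinearMap.smul_apply, smul_eq_mul]
  ring

lemma cD_smul_right (M : Tri k) (x y : Fin 4 → k) (t : k) :
    cD M x (t • y) = t * cD M x y := by
  simp only [cD, map_smul, LinearMap.smul_apply, smul_eq_mul]
  ring

lemma cT_smul_left (M : Tri k) (x y z : Fin 4 → k) (t : k) :
    cT M (t • x) y z = t * cT M x y z := by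
  simp only [cT, map_smul, LinearMap.smul_apply, smul_eq_mul]
  ring

lemma cT_comm (M : Tri k) (x y z : Fin 4 → k) : cT M x y z = cT M z x y := by
  simp only [cT]; ring

lemma cT_swap (M : Tri k) (x y z : Fin 4 → k) : cT M x y z = cT M y x z := by
  simp only [cT]; ring

lemma cD_self (M : Tri k) (x : Fin 4 → k) : cD M x x = 3 * cF M x := by
  simp only [cD, cF]; ring

/-- Elementary trilinear form. -/
noncomputable def elemTri (c : k) (i j l : Fin 4) : Tri k :=
  LinearMap.mk₂ k
    (fun x y => (c * x i * y j) • (LinearMap.proj l : (Fin 4 → k) →ₗ[k] k))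
    (by intros; ext; simp; ring) (by intros; ext; simp; ring)
    (by intros; ext; simp; ring) (by intros; ext; simp; ring)

lemma elemTri_apply (c : k) (i j l : Fin 4) (x y z : Fin 4 → k) :
    elemTri c i j l x y z = c * x i * y j * z l := by
  simp [elemTri]

lemma exists_tri (F : MvPolynomial (Fin 4) k) (hhom : F.IsHomogeneous 3) :
    ∃ M : Tri k, (∀ x, eval x F = cF M x) ∧
      ∀ x y, ∑ i, y i * eval x (pderiv i F) = cD M x y := by
  rw [F.as_sum]
  refine Finset.sum_induction _ (fun G : MvPolynomial (Fin 4) k =>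
    ∃ M : Tri k, (∀ x, eval x G = cF M x) ∧
      ∀ x y, ∑ i, y i * eval x (pderiv i G) = cD M x y) ?_ ?_ ?_
  · rintro G H ⟨M, hM, hM'⟩ ⟨N, hN, hN'⟩
    refine ⟨M + N, fun x => ?_, fun x y => ?_⟩
    · simp [hM, hN, cF]
    · simp only [map_add, mul_add, Finset.sum_add_distrib, hM', hN', cD, LinearMap.add_apply]
      ring
  · exact ⟨0, by simp [cF], by simp [cD]⟩
  · intro m hm
    have hdeg : m.degree = 3 := by
      by_contra h
      exact (MvPolynomial.mem_support_iff.mp hm) (hhom.coeff_eq_zero h)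
    have hcard : Multiset.card (Finsupp.toMultiset m) = 3 := by
      rw [Finsupp.card_toMultiset]; simpa [Finsupp.degree_eq_sum, Finsupp.sum_fintype] using hdeg
    obtain ⟨i, j, l, hijl⟩ := Multiset.card_eq_three.mp hcard
    have hm' : m = Finsupp.single i 1 + Finsupp.single j 1 + Finsupp.single l 1 := by
      apply Multiset.toFinsupp.symm.injective
      change Finsupp.toMultiset m = Finsupp.toMultiset _
      rw [hijl]
      simp [Finsupp.toMultiset_single]
    have hmon : monomial m (coeff m F) = C (coeff m F) * X i * X j * X l := by
      rw [MvPolynomial.C_mul_X_eq_monomial, X, X, monomial_mul, monomial_mul, ← hm']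
      simp
    rw [hmon]
    generalize coeff m F = c
    refine ⟨elemTri c i j l, fun x => ?_, fun x y => ?_⟩
    · simp [cF, elemTri_apply]
    · simp only [cD, elemTri_apply, Derivation.leibniz, pderiv_C, pderiv_X, smul_eq_mul, map_add,
        map_mul, eval_C, eval_X, map_zero, mul_zero, add_zero, mul_add, Finset.sum_add_distrib]
      simp only [Pi.single_apply, apply_ite (eval x), map_one, map_zero, mul_ite, mul_one, mul_zero,
        Finset.sum_ite_eq, Finset.mem_univ, if_true]
      ring

lemma eval_substMatrix (A : Matrix (Fin 4) (Fin 4) k) (F : MvPolynomial (Fin 4) k)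
    (x : Fin 4 → k) : eval x (substMatrix A F) = eval (A *ᵥ x) F := by
  have : (eval x).comp (aeval (fun i => ∑ j, C (A i j) * X j) :
      MvPolynomial (Fin 4) k →ₐ[k] MvPolynomial (Fin 4) k).toRingHom = eval (A *ᵥ x) := by
    apply MvPolynomial.ringHom_ext
    · intro r; simp
    · intro i; simp [Matrix.mulVec, dotProduct]
  exact congrArg (fun g => g F) this

/-- Data of a reflection. -/
lemma refl_data (A : Matrix (Fin 4) (Fin 4) k) (hsq : A * A = 1) (hrk : (A - 1).rank = 1) :
    ∃ (v : Fin 4 → k) (φ : (Fin 4 → k) →ₗ[k] k),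
      v ≠ 0 ∧ φ ≠ 0 ∧ φ v = -2 ∧ (∀ x, A *ᵥ x = x + φ x • v) ∧
      LinearMap.range (A - 1).mulVecLin = Submodule.span k {v} := by
  obtain ⟨⟨v, hvm⟩, hv0, hv⟩ := finrank_eq_one_iff'.mp hrk
  have hv0' : v ≠ 0 := fun h => hv0 (by simpa using h)
  obtain ⟨i, hi⟩ := Function.ne_iff.mp hv0'
  simp only [Pi.zero_apply] at hi
  let φ : (Fin 4 → k) →ₗ[k] k := (v i)⁻¹ • (LinearMap.proj i ∘ₗ (A - 1).mulVecLin)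
  have hA : ∀ x, A *ᵥ x = x + φ x • v := by
    intro x
    obtain ⟨c, hc⟩ := hv ⟨(A - 1).mulVecLin x, LinearMap.mem_range_self _ x⟩
    have hc' : c • v = (A - 1) *ᵥ x := congrArg Subtype.val hc
    have hφ : φ x = c := by
      have : φ x = (v i)⁻¹ * ((A - 1) *ᵥ x) i := rfl
      rw [this, ← hc', Pi.smul_apply, smul_eq_mul]
      field_simp
    rw [hφ, hc', Matrix.sub_mulVec, Matrix.one_mulVec]
    abel
  have hsub : ∀ x, (A - 1).mulVecLin x = φ x • v := by
    intro x
    rw [Matrix.mulVecLin_apply, Matrix.sub_mulVec, Matrix.one_mulVec, hA]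
    abel
  have hφ0 : φ ≠ 0 := by
    intro h
    obtain ⟨x, hx⟩ := hvm
    rw [hsub, h] at hx
    exact hv0' (by simpa using hx.symm)
  refine ⟨v, φ, hv0', hφ0, ?_, hA, ?_⟩
  · obtain ⟨x, hx⟩ := DFunLike.ne_iff.mp hφ0
    have h1 : A *ᵥ (A *ᵥ x) = x := by rw [Matrix.mulVec_mulVec, hsq, Matrix.one_mulVec]
    rw [hA (A *ᵥ x), hA x] at h1
    have h2 := congrFun h1 i
    simp only [map_add, map_smul, Pi.add_apply, Pi.smul_apply, smul_eq_mul] at h2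
    have h3 : (φ x * v i) * (φ v + 2) = 0 := by linear_combination h2
    have h4 := (mul_eq_zero.mp h3).resolve_left (mul_ne_zero hx hi)
    linear_combination h4
  · apply le_antisymm
    · rintro _ ⟨x, rfl⟩
      rw [hsub]
      exact Submodule.smul_mem _ _ (Submodule.mem_span_singleton_self v)
    · rw [Submodule.span_singleton_le_iff_mem]
      exact hvm

lemma coeff_zero_of_cubic [Infinite k] (a b c : k)
    (h : ∀ t : k, a * t + b * t ^ 2 + c * t ^ 3 = 0) : a = 0 := by
  have : (Polynomial.C a * Polynomial.X + Polynomial.C b * Polynomial.X ^ 2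
      + Polynomial.C c * Polynomial.X ^ 3 : Polynomial k) = 0 := by
    apply Polynomial.funext
    intro t
    simpa using h t
  have h1 := congrArg (fun p => Polynomial.coeff p 1) this
  simpa [Polynomial.coeff_X] using h1

lemma exists_root_quad [IsAlgClosed k] (a b c : k) :
    ∃ s t : k, (s ≠ 0 ∨ t ≠ 0) ∧ s ^ 2 * a + s * t * b + t ^ 2 * c = 0 := by
  by_cases ha : a = 0
  · exact ⟨1, 0, by simp, by simp [ha]⟩
  · obtain ⟨s, hs⟩ := IsAlgClosed.exists_root
      (Polynomial.C a * Polynomial.X ^ 2 + Polynomial.C b * Polynomial.X + Polynomial.C c)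
      (by rw [Polynomial.degree_quadratic ha]; decide)
    refine ⟨s, 1, by simp, ?_⟩
    simp [Polynomial.IsRoot] at hs
    linear_combination hs

/-- The key identity for a reflection preserving a smooth cubic. -/
lemma refl_identity [IsAlgClosed k] (M : Tri k)
    (hsm : ∀ x, cF M x = 0 → (∀ y, cD M x y = 0) → x = 0)
    (v : Fin 4 → k) (φ : (Fin 4 → k) →ₗ[k] k) (hφ0 : φ ≠ 0)
    (hφv : φ v = -2) (lam : k) (hinv : ∀ x, cF M (x + φ x • v) = lam * cF M x) :
    cF M v = 0 ∧ ∀ x, cD M x v = - φ x * cD M v x := by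
  have hinf : Infinite k := IsAlgClosed.instInfinite
  have key : ∀ x, φ x * cD M x v + φ x ^ 2 * cD M v x + φ x ^ 3 * cF M v
      = (lam - 1) * cF M x := by
    intro x
    have := hinv x
    rw [cF_add] at this
    linear_combination this
  -- expansion of the key identity along a line through a point of the mirror
  have hlam : lam = 1 := by
    by_contra hne
    have hne' : lam - 1 ≠ 0 := sub_ne_zero.mpr hne
    have hker : 3 ≤ Module.finrank k (LinearMap.ker φ) := by
      have h1 := LinearMap.finrank_range_add_finrank_ker φ
      have h2 : Module.finrank k (LinearMap.range φ) ≤ 1 := by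
        simpa using Submodule.finrank_le (LinearMap.range φ)
      simp at h1
      omega
    have : Nontrivial (LinearMap.ker φ) :=
      Module.nontrivial_of_finrank_pos (R := k) (by omega)
    obtain ⟨u, hu⟩ := exists_ne (0 : LinearMap.ker φ)
    obtain ⟨w, hw⟩ := exists_linearIndependent_pair_of_one_lt_finrank
      (by omega : 1 < Module.finrank k (LinearMap.ker φ)) hu
    obtain ⟨s, t, hst, hq⟩ := exists_root_quad (cD M u v) (cT M u w v) (cD M w v)
    let x : Fin 4 → k := s • (u : Fin 4 → k) + t • (w : Fin 4 → k)
    have hxφ : φ x = 0 := by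
      have h1 : φ u = 0 := u.2
      have h2 : φ w = 0 := w.2
      simp [x, h1, h2]
    have hxv : cD M x v = 0 := by
      simp only [x]
      rw [cD_add, cD_smul, cT_smul_left]
      linear_combination hq
    have hxF : cF M x = 0 := by
      have := key x
      rw [hxφ] at this
      have h : (lam - 1) * cF M x = 0 := by rw [← this]; ring
      exact (mul_eq_zero.mp h).resolve_left hne'
    have hx0 : x = 0 := by
      refine hsm x hxF fun y => ?_
      have := coeff_zero_of_cubic ((lam - 1) * cD M x y)
        ((lam - 1) * cD M y x - φ y * cT M x y v - φ y ^ 2 * cD M v x)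
        ((lam - 1) * cF M y - φ y * cD M y v - φ y ^ 2 * cD M v y - φ y ^ 3 * cF M v) ?_
      · exact (mul_eq_zero.mp this).resolve_left hne'
      · intro t
        have h := key (x + t • y)
        rw [cF_add, cD_add, cD_add_right, map_add, map_smul, hxφ, hxF, hxv, smul_eq_mul] at h
        linear_combination -h
    have hx0' : s • u + t • w = 0 := by
      apply Subtype.ext
      simpa [x] using hx0
    have := LinearIndependent.pair_iff.mp hw s t hx0'
    tauto
  have hQ : ∀ x, cD M x v + φ x * cD M v x + φ x ^ 2 * cF M v = 0 := by
    intro x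
    have key' : ∀ x, φ x * (cD M x v + φ x * cD M v x + φ x ^ 2 * cF M v) = 0 := by
      intro x
      have := key x
      rw [hlam] at this
      linear_combination this
    by_cases hx : φ x = 0
    · obtain ⟨y, hy⟩ := DFunLike.ne_iff.mp hφ0
      have := coeff_zero_of_cubic (φ y * cD M x v)
        (φ y * cT M x y v + φ y ^ 2 * cD M v x)
        (φ y * cD M y v + φ y ^ 2 * cD M v y + φ y ^ 3 * cF M v) (by
          intro t
          have h := key' (x + t • y)
          rw [cD_add, cD_add_right, map_add, map_smul, hx, smul_eq_mul] at h
          linear_combination h)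
      have h := (mul_eq_zero.mp this).resolve_left hy
      rw [h, hx]; ring
    · exact (mul_eq_zero.mp (key' x)).resolve_left hx
  have hv : cF M v = 0 := by
    have := hQ v
    rw [cD_self, hφv] at this
    linear_combination this
  refine ⟨hv, fun x => ?_⟩
  have := hQ x
  rw [hv] at this
  linear_combination this

/-- The geometric core. -/
lemma core [IsAlgClosed k] (M : Tri k)
    (hsm : ∀ x, cF M x = 0 → (∀ y, cD M x y = 0) → x = 0)
    (v w : Fin 4 → k) (φ ψ : (Fin 4 → k) →ₗ[k] k)
    (hind : ∀ a b : k, a • v + b • w = 0 → a = 0 ∧ b = 0)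
    (hv : cF M v = 0) (hw : cF M w = 0)
    (hD : ∀ x, cD M x v = - φ x * cD M v x)
    (hE : ∀ x, cD M x w = - ψ x * cD M w x) :
    (φ w = 0 ∧ ψ v = 0) ↔ ∀ s t : k, cF M (s • v + t • w) = 0 := by
  have hinf : Infinite k := IsAlgClosed.instInfinite
  have expand : ∀ s t : k, cF M (s • v + t • w)
      = s ^ 2 * t * cD M v w + s * t ^ 2 * cD M w v := by
    intro s t
    rw [cF_add, cF_smul, cD_smul, cD_smul_right, hv, hw]
    ring
  constructor
  · rintro ⟨h1, h2⟩ s t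
    have e1 := hD w
    have e2 := hE v
    rw [h1] at e1
    rw [h2] at e2
    rw [expand, e1, e2]
    ring
  · intro h
    have e1 : cD M v w = 0 := by
      refine coeff_zero_of_cubic _ (cD M w v) 0 fun t => ?_
      have := h 1 t
      rw [expand] at this
      linear_combination this
    have e2 : cD M w v = 0 := by
      have := h 1 1
      rw [expand, e1] at this
      linear_combination this
    have hT1 : ∀ x, cT M v w x = - φ w * cD M v x := by
      intro x
      have h1 := hD (w + (1 : k) • x)
      rw [cD_add, cD_add_right, map_add, map_smul, smul_eq_mul] at h1
      have h2 : cT M w x v = cT M v w x := cT_comm M w x v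
      rw [← h2]
      linear_combination h1 - hD w - hD x - φ x * e1
    have hT2 : ∀ x, cT M v w x = - ψ v * cD M w x := by
      intro x
      have h1 := hE (v + (1 : k) • x)
      rw [cD_add, cD_add_right, map_add, map_smul, smul_eq_mul] at h1
      have h2 : cT M v w x = cT M v x w := by rw [cT_swap, ← cT_comm]
      rw [h2]
      linear_combination h1 - hE v - hE x - ψ x * e2
    -- any proportionality of the two tangent planes produces a singular point
    have nosing : ∀ s t : k, (∀ x, s ^ 2 * cD M v x + s * t * cT M v w x
        + t ^ 2 * cD M w x = 0) → s = 0 ∧ t = 0 := by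
      intro s t hst
      apply hind
      refine hsm _ (h s t) fun y => ?_
      rw [cD_add, cD_smul, cT_smul_left]
      linear_combination hst y
    have hφw : φ w = 0 := by
      by_contra hne
      -- `cD M v` is a multiple of `cD M w`
      have hprop : ∀ x, cD M v x = (φ w)⁻¹ * ψ v * cD M w x := by
        intro x
        have : φ w * cD M v x = ψ v * cD M w x := by
          linear_combination hT1 x - hT2 x
        rw [mul_assoc, ← this]
        field_simp
      obtain ⟨s, t, hst, hq⟩ := exists_root_quad ((φ w)⁻¹ * ψ v) (- ψ v) 1
      have := nosing s t fun x => by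
        rw [hT2, hprop]
        linear_combination cD M w x * hq
      tauto
    have hψv : ψ v = 0 := by
      by_contra hne
      have hz : ∀ x, cD M w x = 0 := by
        intro x
        have h3 := hT2 x
        rw [hT1, hφw] at h3
        have : ψ v * cD M w x = 0 := by linear_combination h3
        exact (mul_eq_zero.mp this).resolve_left hne
      have := nosing 0 1 fun x => by rw [hz]; ring
      exact one_ne_zero this.2
    exact ⟨hφw, hψv⟩

lemma commutator_iff (A B : Matrix (Fin 4) (Fin 4) k) (hAsq : A * A = 1) (hBsq : B * B = 1)
    (v w : Fin 4 → k) (φ ψ : (Fin 4 → k) →ₗ[k] k) (hφ0 : φ ≠ 0) (hψ0 : ψ ≠ 0)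
    (hind : ∀ a b : k, a • v + b • w = 0 → a = 0 ∧ b = 0)
    (hA : ∀ x, A *ᵥ x = x + φ x • v) (hB : ∀ x, B *ᵥ x = x + ψ x • w) :
    (∃ c : k, A * B * A⁻¹ * B⁻¹ = c • (1 : Matrix (Fin 4) (Fin 4) k)) ↔
      (φ w = 0 ∧ ψ v = 0) := by
  rw [Matrix.inv_eq_left_inv hAsq, Matrix.inv_eq_left_inv hBsq]
  constructor
  · rintro ⟨c, hc⟩
    have hc1 : c = 1 := by
      have hne : LinearMap.ker (φ.prod ψ) ≠ ⊥ :=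
        LinearMap.ker_ne_bot_of_finrank_lt (by simp)
      obtain ⟨x, hx, hx0⟩ := Submodule.exists_mem_ne_zero_of_ne_bot hne
      have hx' : φ x = 0 ∧ ψ x = 0 := by simpa using hx
      have hAx : A *ᵥ x = x := by rw [hA, hx'.1]; simp
      have hBx : B *ᵥ x = x := by rw [hB, hx'.2]; simp
      have h1 : (A * B * A * B) *ᵥ x = c • x := by
        rw [hc, Matrix.smul_mulVec, Matrix.one_mulVec]
      rw [← Matrix.mulVec_mulVec, ← Matrix.mulVec_mulVec, ← Matrix.mulVec_mulVec,
        hBx, hAx, hBx, hAx] at h1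
      have h2 : (c - 1) • x = 0 := by rw [sub_smul, one_smul, ← h1, sub_self]
      exact sub_eq_zero.mp ((smul_eq_zero.mp h2).resolve_right hx0)
    rw [hc1, one_smul] at hc
    have hcomm : A * B = B * A := by
      calc A * B = (A * B) * (A * A) := by rw [hAsq, mul_one]
        _ = (A * B * A) * (B * B) * A := by rw [hBsq, mul_one]; simp only [mul_assoc]
        _ = (A * B * A * B) * B * A := by simp only [mul_assoc]
        _ = B * A := by rw [hc, one_mul]
    have hx : ∀ x, (ψ x * φ w) • v + (-(φ x * ψ v)) • w = 0 := by
      intro x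
      have h1 : A *ᵥ (B *ᵥ x) = B *ᵥ (A *ᵥ x) := by
        rw [Matrix.mulVec_mulVec, Matrix.mulVec_mulVec, hcomm]
      rw [hA (B *ᵥ x), hB (A *ᵥ x), hA x, hB x] at h1
      simp only [map_add, map_smul, smul_eq_mul] at h1
      ext i
      have h2 := congrFun h1 i
      simp only [Pi.add_apply, Pi.smul_apply, smul_eq_mul, Pi.zero_apply] at h2 ⊢
      linear_combination h2
    obtain ⟨x, hx1⟩ := DFunLike.ne_iff.mp hφ0
    obtain ⟨y, hy1⟩ := DFunLike.ne_iff.mp hψ0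
    refine ⟨(mul_eq_zero.mp (hind _ _ (hx y)).1).resolve_left hy1, ?_⟩
    exact (mul_eq_zero.mp (neg_eq_zero.mp (hind _ _ (hx x)).2)).resolve_left hx1
  · rintro ⟨h1, h2⟩
    have hcomm : A * B = B * A := by
      apply Matrix.ext_of_mulVec_single
      intro i
      rw [← Matrix.mulVec_mulVec, ← Matrix.mulVec_mulVec]
      generalize (Pi.single i 1 : Fin 4 → k) = x
      rw [hA (B *ᵥ x), hB (A *ᵥ x), hA x, hB x]
      simp only [map_add, map_smul, h1, h2, smul_zero, add_zero]
      abel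
    refine ⟨1, ?_⟩
    rw [hcomm, mul_assoc B, hAsq, mul_one, hBsq, one_smul]

end Cubic

/-- Two reflections of a smooth cubic surface with distinct
centers commute in `PGL₄(k)` (i.e. their commutator is a scalar matrix) if and
only if the projective line through their centers is contained in the surface. -/
theorem stmt4 {k : Type*} [Field k] [IsAlgClosed k]
    (F : MvPolynomial (Fin 4) k) (hF0 : F ≠ 0) (hhom : F.IsHomogeneous 3)
    (hsmooth : ∀ x : Fin 4 → k,
      eval x F = 0 → (∀ i, eval x (pderiv i F) = 0) → x = 0)
    (A₁ A₂ : Matrix (Fin 4) (Fin 4) k)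
    (h₁sq : A₁ * A₁ = 1) (h₁rk : (A₁ - 1).rank = 1)
    (h₂sq : A₂ * A₂ = 1) (h₂rk : (A₂ - 1).rank = 1)
    (h₁inv : LeavesInvariant A₁ F) (h₂inv : LeavesInvariant A₂ F)
    (hcenters : LinearMap.range (A₁ - 1).mulVecLin ≠
      LinearMap.range (A₂ - 1).mulVecLin) :
    (∃ c : k, A₁ * A₂ * A₁⁻¹ * A₂⁻¹ = c • (1 : Matrix (Fin 4) (Fin 4) k)) ↔
      VanishesOn F
        (LinearMap.range (A₁ - 1).mulVecLin ⊔ LinearMap.range (A₂ - 1).mulVecLin) := by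
 
  obtain ⟨M, hM, hM'⟩ := exists_tri F hhom
  have hsm : ∀ x, cF M x = 0 → (∀ y, cD M x y = 0) → x = 0 := by
    intro x hx hy
    refine hsmooth x (by rw [hM, hx]) fun i => ?_
    have := hM' x (Pi.single i 1)
    rw [hy] at this
    simpa [Pi.single_apply] using this
  obtain ⟨v, φ, hv0, hφ0, hφv, hA, hrA⟩ := refl_data A₁ h₁sq h₁rk
  obtain ⟨w, ψ, hw0, hψ0, hψw, hB, hrB⟩ := refl_data A₂ h₂sq h₂rk
  obtain ⟨l₁, hl₁⟩ := h₁inv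
  obtain ⟨l₂, hl₂⟩ := h₂inv
  have hinv₁ : ∀ x, cF M (x + φ x • v) = l₁ * cF M x := by
    intro x
    rw [← hA, ← hM, ← hM, ← eval_substMatrix, hl₁, smul_eval]
  have hinv₂ : ∀ x, cF M (x + ψ x • w) = l₂ * cF M x := by
    intro x
    rw [← hB, ← hM, ← hM, ← eval_substMatrix, hl₂, smul_eval]
  obtain ⟨hv, hD⟩ := refl_identity M hsm v φ hφ0 hφv l₁ hinv₁
  obtain ⟨hw, hE⟩ := refl_identity M hsm w ψ hψ0 hψw l₂ hinv₂
  rw [hrA, hrB] at hcenters ⊢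
  have hind : ∀ a b : k, a • v + b • w = 0 → a = 0 ∧ b = 0 := by
    intro a b hab
    have ha : a = 0 := by
      by_contra ha
      apply hcenters
      have hb : b ≠ 0 := by
        rintro rfl
        simp [ha, hv0] at hab
      have hv' : a • v = (-b) • w := by
        rw [neg_smul]; exact eq_neg_of_add_eq_zero_left hab
      rw [← Submodule.span_singleton_smul_eq (IsUnit.mk0 a ha) v, hv',
        Submodule.span_singleton_smul_eq (IsUnit.mk0 (-b) (neg_ne_zero.mpr hb)) w]
    refine ⟨ha, ?_⟩
    simpa [ha, hw0] using hab
  rw [commutator_iff A₁ A₂ h₁sq h₂sq v w φ ψ hφ0 hψ0 hind hA hB,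
    core M hsm v w φ ψ hind hv hw hD hE]
  constructor
  · intro h x hx
    obtain ⟨y, hy, z, hz, rfl⟩ := Submodule.mem_sup.mp hx
    obtain ⟨s, rfl⟩ := Submodule.mem_span_singleton.mp hy
    obtain ⟨t, rfl⟩ := Submodule.mem_span_singleton.mp hz
    rw [hM, h]
  · intro h s t
    rw [← hM]
    apply h
    exact Submodule.add_mem_sup (Submodule.smul_mem _ _ (Submodule.mem_span_singleton_self v))
      (Submodule.smul_mem _ _ (Submodule.mem_span_singleton_self w))
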